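/- The quotient group Λ8♯/Λ8 has exactly 256 elements, consisting of: the zero coset; exactly 120 cosets of minimal norm 1; and exactly 135 cosets of minimal norm 2; moreover every nonzero coset has order 2. Here the minimal norm of a coset is the minimum of ‖x‖² over x in the coset. -/

import Mathlib

noncomputable section

open scoped RealInnerProductSpace

/-- `ℝ^n` with the standard inner product. -/
abbrev E (n : ℕ) := EuclideanSpace ℝ (Fin n)

/-- The standard basis vector `ε i`. -/
def εv {n : ℕ} (i : Fin n) : E n := EuclideanSpace.single i 1

/-- The vector of `ℝ^n` with the given coordinates. -/
def vec {n : ℕ} (x : Fin n → ℝ) : E n := (WithLp.equiv 2 (Fin n → ℝ)).symm x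

/-- The vector of `ℝ^n` with the given integer coordinates. -/
def intVec {n : ℕ} (x : Fin n → ℤ) : E n := (WithLp.equiv 2 (Fin n → ℝ)).symm fun i => (x i : ℝ)

/-- A lattice is integral if all pairwise inner products of its elements are integers. -/
def LatticeIsIntegral {n : ℕ} (L : Submodule ℤ (E n)) : Prop :=
  ∀ x ∈ L, ∀ y ∈ L, ∃ k : ℤ, ⟪x, y⟫ = (k : ℝ)

/-- Two lattices are isometric if a linear isometry of the ambient space carries
one onto the other. -/
def IsometricLattices {n : ℕ} (L M : Submodule ℤ (E n)) : Prop :=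
  ∃ g : E n ≃ₗᵢ[ℝ] E n, g '' (L : Set (E n)) = (M : Set (E n))

/-- The binary code `H ⊆ 𝔽₂⁸` spanned by `(1,1,1,1,0,0,0,0)`, `(1,1,0,0,1,1,0,0)`,
`(1,0,1,0,1,0,1,0)`, `(0,1,0,1,0,1,0,1)`. -/
def code8 : Submodule (ZMod 2) (Fin 8 → ZMod 2) :=
  Submodule.span (ZMod 2)
    {![1, 1, 1, 1, 0, 0, 0, 0], ![1, 1, 0, 0, 1, 1, 0, 0],
     ![1, 0, 1, 0, 1, 0, 1, 0], ![0, 1, 0, 1, 0, 1, 0, 1]}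

/-- The laminated lattice `Λ₈ = {x ∈ ℤ⁸ : x mod 2 ∈ H} ≅ √2·E₈`. -/
def Λ8 : Submodule ℤ (E 8) :=
  Submodule.span ℤ
    {v : E 8 | ∃ x : Fin 8 → ℤ, (fun i => (x i : ZMod 2)) ∈ code8 ∧ v = intVec x}

/-- The dual lattice `Λ♯ = {x : ⟪x,y⟫ ∈ ℤ for all y ∈ Λ}`. -/
def dualLattice {n : ℕ} (Λ : Submodule ℤ (E n)) : Submodule ℤ (E n) where
  carrier := {x | ∀ y ∈ Λ, ∃ k : ℤ, ⟪x, y⟫ = (k : ℝ)}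
  zero_mem' := fun y _ => ⟨0, by simp⟩
  add_mem' := by
    intro a b ha hb y hy
    obtain ⟨k, hk⟩ := ha y hy
    obtain ⟨l, hl⟩ := hb y hy
    exact ⟨k + l, by rw [inner_add_left, hk, hl]; push_cast; ring⟩
  smul_mem' := by
    intro c x hx y hy
    obtain ⟨k, hk⟩ := hx y hy
    refine ⟨c * k, ?_⟩
    rw [← Int.cast_smul_eq_zsmul ℝ c x, real_inner_smul_left, hk]
    push_cast
    ring

/-- The quotient abelian group `Λ♯/Λ`. -/
abbrev DualQuot {n : ℕ} (Λ : Submodule ℤ (E n)) :=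
  (dualLattice Λ) ⧸ (Λ.comap (dualLattice Λ).subtype)

/-- The coset `c ∈ Λ♯/Λ` has minimal norm `m`, i.e. `m` is the minimum of `‖x‖²`
over `x` in the coset `c`. -/
def CosetMinNorm {n : ℕ} (Λ : Submodule ℤ (E n)) (c : DualQuot Λ) (m : ℝ) : Prop :=
  IsLeast {r : ℝ | ∃ x : dualLattice Λ, Submodule.Quotient.mk x = c ∧ r = ‖(x : E n)‖ ^ 2} m

/-- Parity checks of the code. -/
def PP (z : Fin 8 → ℤ) : Prop :=
  (z 0 + z 1 + z 2 + z 3) % 2 = 0 ∧ (z 0 + z 1 + z 4 + z 5) % 2 = 0 ∧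
  (z 0 + z 2 + z 4 + z 6) % 2 = 0 ∧ (z 1 + z 2 + z 4 + z 7) % 2 = 0

instance (z : Fin 8 → ℤ) : Decidable (PP z) := by unfold PP; infer_instance

/-- Squared norm. -/
def nrm (z : Fin 8 → ℤ) : ℤ :=
  z 0 * z 0 + z 1 * z 1 + z 2 * z 2 + z 3 * z 3 + z 4 * z 4 + z 5 * z 5 + z 6 * z 6 + z 7 * z 7

/-- Class of an element modulo twice the lattice. -/
def cls (z : Fin 8 → ℤ) : ℤ :=
  z 0 % 2 + 2 * (z 1 % 2) + 4 * (z 2 % 2) + 8 * (z 4 % 2) +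
  16 * ((z 0 + z 1 + z 2 + z 3) / 2 % 2) + 32 * ((z 0 + z 1 + z 4 + z 5) / 2 % 2) +
  64 * ((z 0 + z 2 + z 4 + z 6) / 2 % 2) + 128 * ((z 1 + z 2 + z 4 + z 7) / 2 % 2)

/-- The standard representative of a class. -/
def stdRep (k : ℤ) : Fin 8 → ℤ :=
  ![k % 2, k / 2 % 2, k / 4 % 2, 2 * (k / 16 % 2) - (k % 2 + k / 2 % 2 + k / 4 % 2),
    k / 8 % 2, 2 * (k / 32 % 2) - (k % 2 + k / 2 % 2 + k / 8 % 2),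
    2 * (k / 64 % 2) - (k % 2 + k / 4 % 2 + k / 8 % 2),
    2 * (k / 128 % 2) - (k / 2 % 2 + k / 4 % 2 + k / 8 % 2)]

/-- Candidate coordinate of a short representative. -/
def candC (w : ℤ) (b : Bool) : ℤ :=
  if w % 2 = 1 then (if b then -1 else 1) else (if b then 2 else 0)

/-- Candidate short representative. -/
def cand (k : ℤ) (i j : ℕ) : Fin 8 → ℤ :=
  fun m => candC (stdRep k m) ((m.val == i) != (m.val == j))

/-- The minimal norm (times four) of a class. -/
def mn (k : ℤ) : ℤ := if k = 0 then 0 else if nrm (stdRep k) % 8 = 4 then 4 else 8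

lemma exists_short : ∀ k : Fin 256, ∃ i j : Fin 9,
    PP (cand k.val i.val j.val) ∧ cls (cand k.val i.val j.val) = k.val ∧
    nrm (cand k.val i.val j.val) = mn k.val := by
  decide +kernel

lemma count4 : (Finset.univ.filter (fun k : Fin 256 => mn k.val = 4)).card = 120 := by
  decide +kernel

lemma count8 : (Finset.univ.filter (fun k : Fin 256 => mn k.val = 8)).card = 135 := by
  decide +kernel

lemma exists_rep (k : Fin 256) : ∃ z, PP z ∧ cls z = k.val ∧ nrm z = mn k.val := by
  obtain ⟨i, j, h⟩ := exists_short k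
  exact ⟨_, h⟩

lemma PP_even {x y : Fin 8 → ℤ} (hx : PP x) (hy : PP y) : ∃ m : ℤ, ∑ i, x i * y i = 2 * m := by
  obtain ⟨h1, h2, h3, h4⟩ := hx
  obtain ⟨g1, g2, g3, g4⟩ := hy
  obtain ⟨a, ha⟩ := Int.dvd_of_emod_eq_zero h1
  obtain ⟨b, hb⟩ := Int.dvd_of_emod_eq_zero h2
  obtain ⟨c, hc⟩ := Int.dvd_of_emod_eq_zero h3
  obtain ⟨d, hd⟩ := Int.dvd_of_emod_eq_zero h4
  obtain ⟨a', ha'⟩ := Int.dvd_of_emod_eq_zero g1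
  obtain ⟨b', hb'⟩ := Int.dvd_of_emod_eq_zero g2
  obtain ⟨c', hc'⟩ := Int.dvd_of_emod_eq_zero g3
  obtain ⟨d', hd'⟩ := Int.dvd_of_emod_eq_zero g4
  rw [Fin.sum_univ_eight]
  have e3 : x 3 = 2 * a - (x 0 + x 1 + x 2) := by linarith
  have e5 : x 5 = 2 * b - (x 0 + x 1 + x 4) := by linarith
  have e6 : x 6 = 2 * c - (x 0 + x 2 + x 4) := by linarith
  have e7 : x 7 = 2 * d - (x 1 + x 2 + x 4) := by linarith
  have f3 : y 3 = 2 * a' - (y 0 + y 1 + y 2) := by linarith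
  have f5 : y 5 = 2 * b' - (y 0 + y 1 + y 4) := by linarith
  have f6 : y 6 = 2 * c' - (y 0 + y 2 + y 4) := by linarith
  have f7 : y 7 = 2 * d' - (y 1 + y 2 + y 4) := by linarith
  rw [e3, e5, e6, e7, f3, f5, f6, f7]
  refine ⟨(2 * a * a' - a * (y 0 + y 1 + y 2) - a' * (x 0 + x 1 + x 2)) +
    (2 * b * b' - b * (y 0 + y 1 + y 4) - b' * (x 0 + x 1 + x 4)) +
    (2 * c * c' - c * (y 0 + y 2 + y 4) - c' * (x 0 + x 2 + x 4)) +
    (2 * d * d' - d * (y 1 + y 2 + y 4) - d' * (x 1 + x 2 + x 4)) +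
    (x 0 * y 0 + x 1 * y 1 + x 2 * y 2 + x 4 * y 4) +
    (x 0 + x 1 + x 2 + x 4) * (y 0 + y 1 + y 2 + y 4), ?_⟩
  ring

lemma PP_nrm {x : Fin 8 → ℤ} (hx : PP x) : ∃ m : ℤ, nrm x = 4 * m := by
  obtain ⟨h1, h2, h3, h4⟩ := hx
  obtain ⟨a, ha⟩ := Int.dvd_of_emod_eq_zero h1
  obtain ⟨b, hb⟩ := Int.dvd_of_emod_eq_zero h2
  obtain ⟨c, hc⟩ := Int.dvd_of_emod_eq_zero h3
  obtain ⟨d, hd⟩ := Int.dvd_of_emod_eq_zero h4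
  unfold nrm
  have e3 : x 3 = 2 * a - (x 0 + x 1 + x 2) := by linarith
  have e5 : x 5 = 2 * b - (x 0 + x 1 + x 4) := by linarith
  have e6 : x 6 = 2 * c - (x 0 + x 2 + x 4) := by linarith
  have e7 : x 7 = 2 * d - (x 1 + x 2 + x 4) := by linarith
  rw [e3, e5, e6, e7]
  refine ⟨(a * a - a * (x 0 + x 1 + x 2)) + (b * b - b * (x 0 + x 1 + x 4)) +
    (c * c - c * (x 0 + x 2 + x 4)) + (d * d - d * (x 1 + x 2 + x 4)) +
    (x 0 * x 0 + x 1 * x 1 + x 2 * x 2 + x 4 * x 4) +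
    (x 0 * x 1 + x 0 * x 2 + x 0 * x 4 + x 1 * x 2 + x 1 * x 4 + x 2 * x 4), ?_⟩
  ring

lemma bit_step {a a' s s' : ℤ} (h : a = 0 ∨ a = 1) (h' : a' = 0 ∨ a' = 1)
    (H : a + 2 * s = a' + 2 * s') : a = a' ∧ s = s' := by omega

lemma bits_eq {a b c d e f g h a' b' c' d' e' f' g' h' : ℤ}
    (_ : a = 0 ∨ a = 1) (_ : b = 0 ∨ b = 1) (_ : c = 0 ∨ c = 1) (_ : d = 0 ∨ d = 1)
    (_ : e = 0 ∨ e = 1) (_ : f = 0 ∨ f = 1) (_ : g = 0 ∨ g = 1) (_ : h = 0 ∨ h = 1)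
    (_ : a' = 0 ∨ a' = 1) (_ : b' = 0 ∨ b' = 1) (_ : c' = 0 ∨ c' = 1) (_ : d' = 0 ∨ d' = 1)
    (_ : e' = 0 ∨ e' = 1) (_ : f' = 0 ∨ f' = 1) (_ : g' = 0 ∨ g' = 1) (_ : h' = 0 ∨ h' = 1)
    (H : a + 2 * b + 4 * c + 8 * d + 16 * e + 32 * f + 64 * g + 128 * h =
      a' + 2 * b' + 4 * c' + 8 * d' + 16 * e' + 32 * f' + 64 * g' + 128 * h') :
    a = a' ∧ b = b' ∧ c = c' ∧ d = d' ∧ e = e' ∧ f = f' ∧ g = g' ∧ h = h' := by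
  obtain ⟨k1, H⟩ := bit_step (a := a) (a' := a') ‹_› ‹_›
    (s := b + 2 * (c + 2 * (d + 2 * (e + 2 * (f + 2 * (g + 2 * h))))))
    (s' := b' + 2 * (c' + 2 * (d' + 2 * (e' + 2 * (f' + 2 * (g' + 2 * h'))))))
    (by linear_combination H)
  obtain ⟨k2, H⟩ := bit_step (a := b) (a' := b') ‹_› ‹_› H
  obtain ⟨k3, H⟩ := bit_step (a := c) (a' := c') ‹_› ‹_› H
  obtain ⟨k4, H⟩ := bit_step (a := d) (a' := d') ‹_› ‹_› H
  obtain ⟨k5, H⟩ := bit_step (a := e) (a' := e') ‹_› ‹_› H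
  obtain ⟨k6, H⟩ := bit_step (a := f) (a' := f') ‹_› ‹_› H
  obtain ⟨k7, H⟩ := bit_step (a := g) (a' := g') ‹_› ‹_› H
  exact ⟨k1, k2, k3, k4, k5, k6, k7, H⟩

lemma emod_two_diff {x y : ℤ} (h : x % 2 = y % 2) : ∃ u, x = y + 2 * u := ⟨(x - y) / 2, by omega⟩

set_option maxHeartbeats 1000000 in
lemma cls_eq_iff {x y : Fin 8 → ℤ} (hx : PP x) (hy : PP y) :
    cls x = cls y ↔ ∃ w, PP w ∧ ∀ i, x i = y i + 2 * w i := by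
  unfold cls
  obtain ⟨h1, h2, h3, h4⟩ := hx
  obtain ⟨g1, g2, g3, g4⟩ := hy
  obtain ⟨a, ha⟩ := Int.dvd_of_emod_eq_zero h1
  obtain ⟨b, hb⟩ := Int.dvd_of_emod_eq_zero h2
  obtain ⟨c, hc⟩ := Int.dvd_of_emod_eq_zero h3
  obtain ⟨d, hd⟩ := Int.dvd_of_emod_eq_zero h4
  obtain ⟨a', ha'⟩ := Int.dvd_of_emod_eq_zero g1
  obtain ⟨b', hb'⟩ := Int.dvd_of_emod_eq_zero g2
  obtain ⟨c', hc'⟩ := Int.dvd_of_emod_eq_zero g3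
  obtain ⟨d', hd'⟩ := Int.dvd_of_emod_eq_zero g4
  rw [ha, hb, hc, hd, ha', hb', hc', hd']
  simp only [Int.mul_ediv_cancel_left _ (two_ne_zero : (2 : ℤ) ≠ 0)]
  constructor
  · intro h
    obtain ⟨k0, k1, k2, k4, ka, kb, kc, kd⟩ := bits_eq (Int.emod_two_eq _) (Int.emod_two_eq _)
      (Int.emod_two_eq _) (Int.emod_two_eq _) (Int.emod_two_eq _) (Int.emod_two_eq _)
      (Int.emod_two_eq _) (Int.emod_two_eq _) (Int.emod_two_eq _) (Int.emod_two_eq _)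
      (Int.emod_two_eq _) (Int.emod_two_eq _) (Int.emod_two_eq _) (Int.emod_two_eq _)
      (Int.emod_two_eq _) (Int.emod_two_eq _) h
    clear h
    obtain ⟨u0, q0⟩ := emod_two_diff k0
    obtain ⟨u1, q1⟩ := emod_two_diff k1
    obtain ⟨u2, q2⟩ := emod_two_diff k2
    obtain ⟨u4, q4⟩ := emod_two_diff k4
    obtain ⟨ua, qa⟩ := emod_two_diff ka
    obtain ⟨ub, qb⟩ := emod_two_diff kb
    obtain ⟨uc, qc⟩ := emod_two_diff kc
    obtain ⟨ud, qd⟩ := emod_two_diff kd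
    clear k0 k1 k2 k4 ka kb kc kd h1 h2 h3 h4 g1 g2 g3 g4
    refine ⟨![u0, u1, u2, 2 * ua - (u0 + u1 + u2), u4, 2 * ub - (u0 + u1 + u4),
      2 * uc - (u0 + u2 + u4), 2 * ud - (u1 + u2 + u4)], ?_, ?_⟩
    · simp [PP]
    · have q3 : x 3 = y 3 + 2 * (2 * ua - (u0 + u1 + u2)) := by linarith
      have q5 : x 5 = y 5 + 2 * (2 * ub - (u0 + u1 + u4)) := by linarith
      have q6 : x 6 = y 6 + 2 * (2 * uc - (u0 + u2 + u4)) := by linarith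
      have q7 : x 7 = y 7 + 2 * (2 * ud - (u1 + u2 + u4)) := by linarith
      intro i
      fin_cases i
      exacts [q0, q1, q2, q3, q4, q5, q6, q7]
  · rintro ⟨w, ⟨w1, w2, w3, w4⟩, hw⟩
    have q0 := hw 0
    have q1 := hw 1
    have q2 := hw 2
    have q3 := hw 3
    have q4 := hw 4
    have q5 := hw 5
    have q6 := hw 6
    have q7 := hw 7
    have k0 : x 0 % 2 = y 0 % 2 := by omega
    have k1 : x 1 % 2 = y 1 % 2 := by omega
    have k2 : x 2 % 2 = y 2 % 2 := by omega
    have k4 : x 4 % 2 = y 4 % 2 := by omega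
    have ka : a % 2 = a' % 2 := by omega
    have kb : b % 2 = b' % 2 := by omega
    have kc : c % 2 = c' % 2 := by omega
    have kd : d % 2 = d' % 2 := by omega
    rw [k0, k1, k2, k4, ka, kb, kc, kd]

lemma nrm_congr {x y : Fin 8 → ℤ} (hx : PP x) (hy : PP y) (h : cls x = cls y) :
    nrm x % 8 = nrm y % 8 := by
  obtain ⟨w, hw, e⟩ := (cls_eq_iff hx hy).1 h
  obtain ⟨m, hm⟩ := PP_even hy hw
  obtain ⟨l, hl⟩ := PP_nrm hw
  have : nrm x = nrm y + 4 * (∑ i, y i * w i) + 4 * nrm w := by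
    unfold nrm
    rw [Fin.sum_univ_eight]
    simp only [e]
    ring
  omega

lemma nrm_eq_sum (x : Fin 8 → ℤ) : nrm x = ∑ i, x i * x i := by
  rw [Fin.sum_univ_eight]; rfl

lemma nrm_nonneg (x : Fin 8 → ℤ) : 0 ≤ nrm x := by
  rw [nrm_eq_sum]; exact Finset.sum_nonneg fun i _ => mul_self_nonneg _

lemma nrm_zero {x : Fin 8 → ℤ} (h : nrm x = 0) : cls x = 0 := by
  have : ∀ i, x i = 0 := by
    intro i
    rw [nrm_eq_sum, Finset.sum_eq_zero_iff_of_nonneg (fun i _ => mul_self_nonneg _)] at h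
    exact mul_self_eq_zero.1 (h i (Finset.mem_univ i))
  simp [cls, this]

lemma nrm_min {x y : Fin 8 → ℤ} (hx : PP x) (hy : PP y) (h : cls x = cls y)
    (hn : nrm y = mn (cls y)) : nrm y ≤ nrm x := by
  have h1 := nrm_congr hx hy h
  have h2 := nrm_nonneg x
  have h3 : nrm x = 0 → cls y = 0 := fun h0 => h ▸ nrm_zero h0
  unfold mn at hn
  split_ifs at hn with c1 c2
  · omega
  · omega
  · have : nrm x ≠ 0 := fun h0 => c1 (h3 h0)
    omega

/-! ### The lattices -/

lemma mem_code8 (x : Fin 8 → ℤ) : (fun i => (x i : ZMod 2)) ∈ code8 ↔ PP x := by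
  have key : ∀ z : ℤ, ((z : ZMod 2) = 0 ↔ z % 2 = 0) := by
    intro z
    rw [ZMod.intCast_zmod_eq_zero_iff_dvd]
    push_cast
    omega
  constructor
  · intro h
    have : ∀ c ∈ code8, c 0 + c 1 + c 2 + c 3 = 0 ∧ c 0 + c 1 + c 4 + c 5 = 0 ∧
        c 0 + c 2 + c 4 + c 6 = 0 ∧ c 1 + c 2 + c 4 + c 7 = 0 := by
      intro c hc
      unfold code8 at hc
      induction hc using Submodule.span_induction with
      | mem c hc =>
        rcases hc with rfl | rfl | rfl | rfl <;> decide
      | zero => simp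
      | add a b _ _ ha hb =>
        obtain ⟨a1, a2, a3, a4⟩ := ha
        obtain ⟨b1, b2, b3, b4⟩ := hb
        simp only [Pi.add_apply]
        exact ⟨by linear_combination a1 + b1, by linear_combination a2 + b2,
          by linear_combination a3 + b3, by linear_combination a4 + b4⟩
      | smul r a _ ha =>
        obtain ⟨a1, a2, a3, a4⟩ := ha
        simp only [Pi.smul_apply, smul_eq_mul]
        exact ⟨by linear_combination r * a1, by linear_combination r * a2,
          by linear_combination r * a3, by linear_combination r * a4⟩
    have := this _ h
    simpa only [← Int.cast_add, key, PP] using this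
  · intro h
    unfold PP at h
    simp only [← key, Int.cast_add] at h
    obtain ⟨h1, h2, h3, h4⟩ := h
    have gen : ∀ a b c e : ZMod 2,
        ![a, b, c, a + b + c, e, a + b + e, a + c + e, b + c + e] =
          (a + e) • ![1, 1, 1, 1, 0, 0, 0, 0] + (a + c) • ![1, 1, 0, 0, 1, 1, 0, 0] +
          (a + c + e) • ![1, 0, 1, 0, 1, 0, 1, 0] +
          (b + c + e) • ![0, 1, 0, 1, 0, 1, 0, 1] := by
      decide +kernel
    have chr : ∀ a b c d : ZMod 2, a + b + c + d = 0 → d = a + b + c := by decide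
    have e : (fun i => (x i : ZMod 2)) = ![(x 0 : ZMod 2), x 1, x 2, x 0 + x 1 + x 2, x 4,
        x 0 + x 1 + x 4, x 0 + x 2 + x 4, x 1 + x 2 + x 4] := by
      rw [← chr _ _ _ _ h1, ← chr _ _ _ _ h2, ← chr _ _ _ _ h3, ← chr _ _ _ _ h4]
      funext i
      fin_cases i <;> rfl
    rw [e, gen]
    unfold code8
    refine add_mem (add_mem (add_mem ?_ ?_) ?_) ?_ <;>
      refine Submodule.smul_mem _ _ (Submodule.subset_span ?_) <;> simp

lemma intVec_apply (x : Fin 8 → ℤ) (i : Fin 8) : intVec x i = (x i : ℝ) := rfl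

lemma intVec_injective {x y : Fin 8 → ℤ} (h : (intVec x : E 8) = intVec y) : x = y := by
  funext i
  have := congrArg (fun v : E 8 => v i) h
  simpa [intVec_apply] using this

lemma PP_add {x y : Fin 8 → ℤ} (hx : PP x) (hy : PP y) : PP (x + y) := by
  unfold PP at *
  simp only [Pi.add_apply]
  omega

lemma PP_smul {x : Fin 8 → ℤ} (c : ℤ) (hx : PP x) : PP (c • x) := by
  unfold PP at *
  simp only [Pi.smul_apply, smul_eq_mul, ← mul_add]
  obtain ⟨h1, h2, h3, h4⟩ := hx
  simp [Int.mul_emod, h1, h2, h3, h4]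

lemma mem_Λ8 (v : E 8) : v ∈ Λ8 ↔ ∃ z, PP z ∧ v = intVec z := by
  constructor
  · intro h
    unfold Λ8 at h
    induction h using Submodule.span_induction with
    | mem v hv =>
      obtain ⟨x, hx, rfl⟩ := hv
      exact ⟨x, (mem_code8 x).1 hx, rfl⟩
    | zero => exact ⟨0, by decide, by ext i; simp [intVec_apply]⟩
    | add a b _ _ ha hb =>
      obtain ⟨x, hx, rfl⟩ := ha
      obtain ⟨y, hy, rfl⟩ := hb
      exact ⟨x + y, PP_add hx hy, by ext i; simp [intVec_apply]⟩
    | smul c a _ ha =>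
      obtain ⟨x, hx, rfl⟩ := ha
      refine ⟨c • x, PP_smul c hx, ?_⟩
      rw [← Int.cast_smul_eq_zsmul ℝ]
      ext i
      simp [intVec_apply]
  · rintro ⟨z, hz, rfl⟩
    exact Submodule.subset_span ⟨z, (mem_code8 z).2 hz, rfl⟩

lemma inner_intVec (v : E 8) (x : Fin 8 → ℤ) : ⟪v, intVec x⟫ = ∑ i, v i * (x i : ℝ) := by
  simp [PiLp.inner_apply, intVec_apply, mul_comm]

lemma mem_dual (v : E 8) : v ∈ dualLattice Λ8 ↔ ∃ z, PP z ∧ ∀ i, v i = (z i : ℝ) / 2 := by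
  constructor
  · intro h
    have h' : ∀ x, PP x → ∃ k : ℤ, ∑ i, v i * (x i : ℝ) = k := by
      intro x hx
      obtain ⟨k, hk⟩ := h (intVec x) ((mem_Λ8 _).2 ⟨x, hx, rfl⟩)
      exact ⟨k, by rw [← inner_intVec, hk]⟩
    have hz : ∀ j, ∃ k : ℤ, v j * 2 = k := by
      intro j
      obtain ⟨k, hk⟩ := h' (Pi.single j 2) (by revert j; decide)
      refine ⟨k, ?_⟩
      rw [← hk, Finset.sum_eq_single j]
      · simp
      · intro b _ hb
        simp [Pi.single_eq_of_ne hb]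
      · simp
    choose z hz using hz
    have hv : ∀ i, v i = (z i : ℝ) / 2 := fun i => by rw [← hz]; ring
    refine ⟨z, ?_, hv⟩
    obtain ⟨a, ha⟩ := h' ![1, 1, 1, 1, 0, 0, 0, 0] (by decide)
    obtain ⟨b, hb⟩ := h' ![1, 1, 0, 0, 1, 1, 0, 0] (by decide)
    obtain ⟨c, hc⟩ := h' ![1, 0, 1, 0, 1, 0, 1, 0] (by decide)
    obtain ⟨d, hd⟩ := h' ![0, 1, 1, 0, 1, 0, 0, 1] (by decide)
    simp [Fin.sum_univ_eight, hv] at ha hb hc hd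
    have ha' : z 0 + z 1 + z 2 + z 3 = 2 * a := by
      have : (z 0 + z 1 + z 2 + z 3 : ℝ) = 2 * a := by linarith
      exact_mod_cast this
    have hb' : z 0 + z 1 + z 4 + z 5 = 2 * b := by
      have : (z 0 + z 1 + z 4 + z 5 : ℝ) = 2 * b := by linarith
      exact_mod_cast this
    have hc' : z 0 + z 2 + z 4 + z 6 = 2 * c := by
      have : (z 0 + z 2 + z 4 + z 6 : ℝ) = 2 * c := by linarith
      exact_mod_cast this
    have hd' : z 1 + z 2 + z 4 + z 7 = 2 * d := by
      have : (z 1 + z 2 + z 4 + z 7 : ℝ) = 2 * d := by linarith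
      exact_mod_cast this
    unfold PP
    omega
  · rintro ⟨z, hz, hv⟩ y hy
    obtain ⟨x, hx, rfl⟩ := (mem_Λ8 _).1 hy
    obtain ⟨m, hm⟩ := PP_even hz hx
    refine ⟨m, ?_⟩
    rw [inner_intVec]
    have : (∑ i, (z i : ℝ) * (x i : ℝ)) = 2 * m := by exact_mod_cast hm
    have e : ∑ i, v i * (x i : ℝ) = (∑ i, (z i : ℝ) * (x i : ℝ)) / 2 := by
      rw [Finset.sum_div]
      exact Finset.sum_congr rfl fun i _ => by rw [hv]; ring
    rw [e, this]
    ring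

lemma norm_half {v : E 8} {z : Fin 8 → ℤ} (hv : ∀ i, v i = (z i : ℝ) / 2) :
    ‖v‖ ^ 2 = (nrm z : ℝ) / 4 := by
  rw [EuclideanSpace.norm_sq_eq, nrm_eq_sum]
  push_cast
  rw [Finset.sum_div]
  exact Finset.sum_congr rfl fun i _ => by rw [hv, Real.norm_eq_abs, sq_abs]; ring

lemma mk_eq_iff {v w : dualLattice Λ8} {x y : Fin 8 → ℤ} (hx : PP x) (hy : PP y)
    (hv : ∀ i, (v : E 8) i = (x i : ℝ) / 2) (hw : ∀ i, (w : E 8) i = (y i : ℝ) / 2) :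
    (Submodule.Quotient.mk v : DualQuot Λ8) = Submodule.Quotient.mk w ↔ cls x = cls y := by
  rw [Submodule.Quotient.eq, Submodule.mem_comap, mem_Λ8, cls_eq_iff hx hy]
  refine exists_congr fun u => and_congr_right fun _ => ?_
  constructor
  · intro h i
    have := congrArg (fun v : E 8 => v i) h
    simp [intVec_apply, hv, hw] at this
    have h2 : (x i : ℝ) = y i + 2 * u i := by linarith
    exact_mod_cast h2
  · intro h
    ext i
    simp [intVec_apply, hv, hw, h i]
    ring

/-- A short vector in each class. -/
def rep (k : Fin 256) : Fin 8 → ℤ := (exists_rep k).choose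

lemma rep_spec (k : Fin 256) :
    PP (rep k) ∧ cls (rep k) = k.val ∧ nrm (rep k) = mn k.val := (exists_rep k).choose_spec

/-- Half of the short vector, as an element of the dual lattice. -/
def repV (k : Fin 256) : dualLattice Λ8 :=
  ⟨vec fun i => (rep k i : ℝ) / 2, (mem_dual _).2 ⟨rep k, (rep_spec k).1, fun _ => rfl⟩⟩

lemma repV_apply (k : Fin 256) (i : Fin 8) : (repV k : E 8) i = (rep k i : ℝ) / 2 := rfl

/-- The cosets. -/
def repQ (k : Fin 256) : DualQuot Λ8 := Submodule.Quotient.mk (repV k)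

lemma cls_bound (x : Fin 8 → ℤ) : 0 ≤ cls x ∧ cls x < 256 := by
  unfold cls
  generalize (x 0 + x 1 + x 2 + x 3) / 2 = a
  generalize (x 0 + x 1 + x 4 + x 5) / 2 = b
  generalize (x 0 + x 2 + x 4 + x 6) / 2 = c
  generalize (x 1 + x 2 + x 4 + x 7) / 2 = d
  omega

lemma repQ_bij : Function.Bijective repQ := by
  constructor
  · intro k l h
    have := (mk_eq_iff (rep_spec k).1 (rep_spec l).1 (repV_apply k) (repV_apply l)).1 h
    rw [(rep_spec k).2.1, (rep_spec l).2.1] at this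
    exact Fin.ext (by exact_mod_cast this)
  · intro c
    obtain ⟨v, rfl⟩ := Submodule.Quotient.mk_surjective _ c
    obtain ⟨z, hz, hv⟩ := (mem_dual _).1 v.2
    obtain ⟨h0, h1⟩ := cls_bound z
    refine ⟨⟨(cls z).toNat, by omega⟩, ?_⟩
    refine (mk_eq_iff (rep_spec _).1 hz (repV_apply _) hv).2 ?_
    rw [(rep_spec _).2.1]
    simp [h0]

lemma repQ_min (k : Fin 256) : CosetMinNorm Λ8 (repQ k) ((mn k.val : ℝ) / 4) := by
  obtain ⟨h1, h2, h3⟩ := rep_spec k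
  constructor
  · exact ⟨repV k, rfl, by rw [norm_half (repV_apply k), h3]⟩
  · rintro r ⟨v, hv, rfl⟩
    obtain ⟨z, hz, hvz⟩ := (mem_dual _).1 v.2
    have e := (mk_eq_iff hz h1 hvz (repV_apply k)).1 hv
    have := nrm_min hz h1 e (by rw [h2, h3])
    rw [norm_half hvz, ← h3]
    have : (nrm (rep k) : ℝ) ≤ nrm z := by exact_mod_cast this
    linarith

lemma min_iff (k : Fin 256) (m : ℤ) : CosetMinNorm Λ8 (repQ k) m ↔ mn k.val = 4 * m := by
  constructor
  · intro h
    have e : (m : ℝ) = (mn k.val : ℝ) / 4 := IsLeast.unique h (repQ_min k)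
    have : (mn k.val : ℝ) = 4 * m := by rw [e]; ring
    exact_mod_cast this
  · intro h
    have := repQ_min k
    rw [h] at this
    convert this using 1
    push_cast
    ring

lemma ncard_min (m : ℤ) : {c : DualQuot Λ8 | CosetMinNorm Λ8 c m}.ncard =
    (Finset.univ.filter (fun k : Fin 256 => mn k.val = 4 * m)).card := by
  rw [← Set.ncard_coe_finset, ← Set.ncard_image_of_injective _ repQ_bij.1]
  congr 1
  ext c
  obtain ⟨k, rfl⟩ := repQ_bij.2 c
  simp [min_iff, repQ_bij.1.eq_iff]

lemma repQ_zero : repQ 0 = 0 := by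
  have h : (Submodule.Quotient.mk (repV 0) : DualQuot Λ8) = Submodule.Quotient.mk 0 :=
    (mk_eq_iff (x := rep 0) (y := 0) (rep_spec 0).1 (by decide) (repV_apply 0)
      (fun i => by simp)).2 (by rw [(rep_spec 0).2.1]; rfl)
  exact h

/-- The quotient `Λ₈♯/Λ₈` has exactly 256 elements: the zero coset, 120 cosets of
minimal norm 1, and 135 cosets of minimal norm 2; every nonzero coset has order 2. -/
theorem Λ8_dual_quotient_classes :
    Nat.card (DualQuot Λ8) = 256 ∧
    (∀ c : DualQuot Λ8, c = 0 ∨ CosetMinNorm Λ8 c 1 ∨ CosetMinNorm Λ8 c 2) ∧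
    {c : DualQuot Λ8 | CosetMinNorm Λ8 c 1}.ncard = 120 ∧
    {c : DualQuot Λ8 | CosetMinNorm Λ8 c 2}.ncard = 135 ∧
    (∀ c : DualQuot Λ8, c ≠ 0 → addOrderOf c = 2) := by
  refine ⟨?_, ?_, ?_, ?_, ?_⟩
  · rw [← Nat.card_congr (Equiv.ofBijective repQ repQ_bij)]
    simp
  · intro c
    obtain ⟨k, rfl⟩ := repQ_bij.2 c
    have h1 := min_iff k 1
    have h2 := min_iff k 2
    push_cast at h1 h2
    rw [h1, h2]
    unfold mn
    split_ifs with c1 c2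
    · left
      have : k = 0 := Fin.ext (by simpa using c1)
      rw [this, repQ_zero]
    · right; left; norm_num
    · right; right; norm_num
  · have := ncard_min 1
    push_cast at this
    rw [this]
    exact count4
  · have := ncard_min 2
    push_cast at this
    rw [this]
    exact count8
  · intro c hc
    refine addOrderOf_eq_prime ?_ hc
    obtain ⟨v, rfl⟩ := Submodule.Quotient.mk_surjective _ c
    obtain ⟨z, hz, hv⟩ := (mem_dual _).1 v.2
    have h : (Submodule.Quotient.mk (2 • v) : DualQuot Λ8) = 0 := by
      rw [Submodule.Quotient.mk_eq_zero, Submodule.mem_comap, mem_Λ8]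
      refine ⟨z, hz, ?_⟩
      ext i
      simp [intVec_apply, hv, two_nsmul]
    exact h
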